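/- Let σ_1,…,σ_n : Ω → H be a (k+1)-nondegenerate holomorphic frame, k ≥ 1, with the conventions det J_{−1}h := 1 and h_0 := J_0 h. Define the n×n matrix Q_k(z) := (det J_{k−1}h(z))⁻¹ · h_k(z) (the metric of the quotient bundle J_k(E)/J_{k−1}(E)). Then for every z ∈ Ω, (det J_k h(z))⁻¹·det(J_{k−1}h(z))·h_k(z)⁻¹·h_{k+1}(z) − (det J_{k−1}h(z))⁻¹·det(J_{k−2}h(z))·h_{k−1}(z)⁻¹·h_k(z) = ∂/∂z̄ ( Q_k⁻¹ · ∂Q_k/∂z )(z); that is, (trace⊗Id_{n×n})(𝒦_{J_k(E_f)}) − (trace⊗Id_{n×n})(𝒦_{J_{k−1}(E_f)}) = 𝒦_{J_k(E_f)/J_{k−1}(E_f)}, where (trace⊗Id_{n×n}) of a (k+1)n×(k+1)n matrix written in n×n blocks is the sum of its diagonal blocks. -/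

import Mathlib

open Matrix

noncomputable section

/-- Wirtinger derivative `∂g/∂z := (1/2)(∂g/∂x − i·∂g/∂y)`. -/
def Dz {E : Type*} [NormedAddCommGroup E] [NormedSpace ℂ E] (g : ℂ → E) (z : ℂ) : E :=
  (1 / 2 : ℂ) • (fderiv ℝ g z 1 - Complex.I • fderiv ℝ g z Complex.I)

/-- Wirtinger derivative `∂g/∂z̄ := (1/2)(∂g/∂x + i·∂g/∂y)`. -/
def Dzbar {E : Type*} [NormedAddCommGroup E] [NormedSpace ℂ E] (g : ℂ → E) (z : ℂ) : E :=
  (1 / 2 : ℂ) • (fderiv ℝ g z 1 + Complex.I • fderiv ℝ g z Complex.I)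

/-- Entrywise Wirtinger derivative `∂/∂z` of a matrix-valued function. -/
def mDz {ι : Type*} (M : ℂ → Matrix ι ι ℂ) (z : ℂ) : Matrix ι ι ℂ :=
  Matrix.of fun i j => Dz (fun w => M w i j) z

/-- Entrywise Wirtinger derivative `∂/∂z̄` of a matrix-valued function. -/
def mDzbar {ι : Type*} (M : ℂ → Matrix ι ι ℂ) (z : ℂ) : Matrix ι ι ℂ :=
  Matrix.of fun i j => Dzbar (fun w => M w i j) z

variable {H : Type*} [NormedAddCommGroup H] [InnerProductSpace ℂ H] [CompleteSpace H]

/-- `⟪x, y⟫` is the Mathlib inner product (conjugate-linear in the first argument);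
it equals the paper's inner product `⟨y, x⟩`, which is linear in the first argument. -/
local notation "⟪" x ", " y "⟫" => (inner ℂ x y : ℂ)

/-- `jGram σ N z` is the Gram matrix of the family
`(σ_1(z),…,σ_n(z), σ_1′(z),…,σ_n′(z),…,σ_1^{(N−1)}(z),…,σ_n^{(N−1)}(z))`, with `(a,b)` entry
equal to `⟨b-th vector, a-th vector⟩_paper = ⟪a-th vector, b-th vector⟫`.  The jet Gram matrix
`J_k h` of the paper is `jGram σ (k+1)`. -/
def jGram {n : ℕ} (σ : Fin n → ℂ → H) (N : ℕ) (z : ℂ) :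
    Matrix (Fin N × Fin n) (Fin N × Fin n) ℂ :=
  Matrix.of fun p q =>
    ⟪iteratedDeriv (p.1 : ℕ) (σ p.2) z, iteratedDeriv (q.1 : ℕ) (σ q.2) z⟫

/-- `hMat σ m z` is the paper's matrix `h_m(z)`: its `(i,j)` entry is the determinant of the
`(nm+1)×(nm+1)` matrix whose `(a,b)` entry is `⟨u_b, v_a⟩_paper = ⟪v_a, u_b⟫`, where
`u` is the family `(σ_1(z),…,σ_n^{(m−1)}(z))` followed by `σ_j^{(m)}(z)` and `v` is the same
family followed by `σ_i^{(m)}(z)`.  (For `m = 0` this is the Gram matrix `h_0 = J_0 h`.) -/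
def hMat {n : ℕ} (σ : Fin n → ℂ → H) (m : ℕ) (z : ℂ) : Matrix (Fin n) (Fin n) ℂ :=
  Matrix.of fun i j =>
    (Matrix.of fun a b : (Fin m × Fin n) ⊕ Unit =>
      ⟪Sum.elim (fun lp : Fin m × Fin n => iteratedDeriv (lp.1 : ℕ) (σ lp.2) z)
          (fun _ => iteratedDeriv m (σ i) z) a,
        Sum.elim (fun lp : Fin m × Fin n => iteratedDeriv (lp.1 : ℕ) (σ lp.2) z)
          (fun _ => iteratedDeriv m (σ j) z) b⟫).det

/- In the jet frame the connection form of `J_m(E)` is a block companion matrix, and its block trace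
`T_m` consists of the coefficients of the derivatives of order `m` in the orthogonal projection of
`σ^{(m+1)}` onto the span of the derivatives of order at most `m`. Let `e_m` be the component of
`σ^{(m)}` orthogonal to the lower derivatives and `S_m` the Gram matrix of `e_m`; a Schur complement
identifies `S_m` with `(det J_{m-1}h)⁻¹·h_m`. Pairing `e_m` with `∂e_{m+1}/∂z̄`, which lies in the
span of the derivatives of order at most `m`, gives `∂T_m/∂z̄ = S_m⁻¹·S_{m+1}`, and differentiating
`⟪e_{m+1}, σ^{(m+1)}⟫` gives `S_{m+1}⁻¹·∂S_{m+1}/∂z = T_{m+1} - T_m`. Applying `∂/∂z̄` to the latter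
for `m + 1 = k` yields the trace formula. -/

open Filter Submodule
open scoped Topology

section Wirtinger

variable {E V : Type*} [NormedAddCommGroup E] [NormedSpace ℂ E]
  [NormedAddCommGroup V] [InnerProductSpace ℂ V] {z : ℂ}

theorem Dz_congr {f g : ℂ → E} (h : f =ᶠ[𝓝 z] g) : Dz f z = Dz g z := by
  simp only [Dz, h.fderiv_eq]

theorem Dzbar_congr {f g : ℂ → E} (h : f =ᶠ[𝓝 z] g) : Dzbar f z = Dzbar g z := by
  simp only [Dzbar, h.fderiv_eq]

theorem Dzbar_const (x : E) : Dzbar (fun _ => x) z = 0 := by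
  simp [Dzbar]

theorem Dzbar_fun_sub {f g : ℂ → E} (hf : DifferentiableAt ℝ f z) (hg : DifferentiableAt ℝ g z) :
    Dzbar (fun w => f w - g w) z = Dzbar f z - Dzbar g z := by
  simp only [Dzbar, fderiv_fun_sub hf hg, _root_.sub_apply]
  module

theorem Dzbar_fun_sum {ι : Type*} [Fintype ι] {F : ι → ℂ → E}
    (hF : ∀ i, DifferentiableAt ℝ (F i) z) :
    Dzbar (fun w => ∑ i, F i w) z = ∑ i, Dzbar (F i) z := by
  simp only [Dzbar, fderiv_fun_sum fun i _ => hF i, _root_.sum_apply, Finset.smul_sum,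
    ← Finset.sum_add_distrib]

theorem Dzbar_fun_smul {c : ℂ → ℂ} {f : ℂ → E} (hc : DifferentiableAt ℝ c z)
    (hf : DifferentiableAt ℝ f z) :
    Dzbar (fun w => c w • f w) z = Dzbar c z • f z + c z • Dzbar f z := by
  simp only [Dzbar, fderiv_fun_smul hc hf, _root_.add_apply, _root_.smul_apply,
    ContinuousLinearMap.smulRight_apply, smul_eq_mul]
  module

theorem fderiv_real_apply_eq_smul_deriv {f : ℂ → E} (hf : DifferentiableAt ℂ f z) (v : ℂ) :
    fderiv ℝ f z v = v • deriv f z := by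
  rw [(hf.hasFDerivAt.restrictScalars ℝ).fderiv, ContinuousLinearMap.coe_restrictScalars',
    fderiv_eq_smul_deriv]

theorem Dz_eq_deriv {f : ℂ → E} (hf : DifferentiableAt ℂ f z) : Dz f z = deriv f z := by
  simp only [Dz, fderiv_real_apply_eq_smul_deriv hf, smul_smul, Complex.I_mul_I]
  module

theorem Dzbar_eq_zero {f : ℂ → E} (hf : DifferentiableAt ℂ f z) : Dzbar f z = 0 := by
  simp only [Dzbar, fderiv_real_apply_eq_smul_deriv hf, smul_smul, Complex.I_mul_I]
  module

theorem Dz_inner {f g : ℂ → V} (hf : DifferentiableAt ℝ f z) (hg : DifferentiableAt ℝ g z) :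
    Dz (fun w => ⟪f w, g w⟫) z = ⟪Dzbar f z, g z⟫ + ⟪f z, Dz g z⟫ := by
  simp only [Dz, Dzbar, fderiv_inner_apply ℂ hf hg, inner_smul_left, inner_smul_right,
    inner_add_left, inner_sub_right, smul_eq_mul, map_div₀, map_one, map_ofNat, Complex.conj_I]
  ring

theorem Dzbar_inner {f g : ℂ → V} (hf : DifferentiableAt ℝ f z) (hg : DifferentiableAt ℝ g z) :
    Dzbar (fun w => ⟪f w, g w⟫) z = ⟪Dz f z, g z⟫ + ⟪f z, Dzbar g z⟫ := by
  simp only [Dz, Dzbar, fderiv_inner_apply ℂ hf hg, inner_smul_left, inner_smul_right,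
    inner_sub_left, inner_add_right, smul_eq_mul, map_div₀, map_one, map_ofNat, Complex.conj_I]
  ring

theorem mDz_congr {ι : Type*} {M N : ℂ → Matrix ι ι ℂ} (h : M =ᶠ[𝓝 z] N) :
    mDz M z = mDz N z := by
  ext i j
  exact Dz_congr (h.mono fun w hw => congrFun₂ hw i j)

theorem mDzbar_congr {ι : Type*} {M N : ℂ → Matrix ι ι ℂ} (h : M =ᶠ[𝓝 z] N) :
    mDzbar M z = mDzbar N z := by
  ext i j
  exact Dzbar_congr (h.mono fun w hw => congrFun₂ hw i j)

theorem mDzbar_fun_sub {ι : Type*} {M N : ℂ → Matrix ι ι ℂ}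
    (hM : ∀ i j, DifferentiableAt ℝ (fun w => M w i j) z)
    (hN : ∀ i j, DifferentiableAt ℝ (fun w => N w i j) z) :
    mDzbar (fun w => M w - N w) z = mDzbar M z - mDzbar N z := by
  ext i j
  exact Dzbar_fun_sub (hM i j) (hN i j)

end Wirtinger

section MatrixDifferentiability

variable {𝕜 E 𝕂 ι : Type*} [NontriviallyNormedField 𝕜] [NormedAddCommGroup E] [NormedSpace 𝕜 E]
  [NormedField 𝕂] [NormedAlgebra 𝕜 𝕂] [Fintype ι] [DecidableEq ι] {M : E → Matrix ι ι 𝕂} {z : E}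

theorem differentiableAt_matrix_det (hM : ∀ i j, DifferentiableAt 𝕜 (fun w => M w i j) z) :
    DifferentiableAt 𝕜 (fun w => (M w).det) z := by
  simp only [Matrix.det_apply']
  exact DifferentiableAt.fun_sum fun τ _ =>
    (HasFDerivAt.finsetProd fun i _ => (hM _ _).hasFDerivAt).differentiableAt.const_mul _

theorem differentiableAt_matrix_inv_apply (hM : ∀ i j, DifferentiableAt 𝕜 (fun w => M w i j) z)
    (hz : (M z).det ≠ 0) (i j : ι) : DifferentiableAt 𝕜 (fun w => (M w)⁻¹ i j) z := by
  simp only [Matrix.inv_def, Ring.inverse_eq_inv', Matrix.smul_apply, smul_eq_mul,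
    Matrix.adjugate_apply]
  refine ((differentiableAt_matrix_det hM).fun_inv hz).mul
    (differentiableAt_matrix_det fun a b => ?_)
  by_cases ha : a = j
  · simp only [ha, Matrix.updateRow_self]
    exact differentiableAt_const _
  · simp only [Matrix.updateRow_ne ha]
    exact hM a b

end MatrixDifferentiability

section SpanPerp

variable {𝕜 V ι κ : Type*} [RCLike 𝕜] [NormedAddCommGroup V] [InnerProductSpace 𝕜 V]

theorem mem_orthogonal_span_range_iff {v : ι → V} {u : V} :
    u ∈ (span 𝕜 (Set.range v))ᗮ ↔ ∀ i, inner 𝕜 (v i) u = 0 := by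
  rw [← span_singleton_le_iff_mem, ← Submodule.IsOrtho, isOrtho_comm, isOrtho_span]
  simp only [Set.forall_mem_range, Set.mem_singleton_iff, forall_eq]

instance hasOrthogonalProjection_span_range [Finite ι] (v : ι → V) :
    (span 𝕜 (Set.range v)).HasOrthogonalProjection :=
  have := FiniteDimensional.span_of_finite 𝕜 (Set.finite_range v)
  inferInstance

variable (𝕜) in
/-- The orthogonal projection onto the orthogonal complement of the span of the family `v`. -/
def spanPerp [Finite ι] (v : ι → V) : V →L[𝕜] V :=
  (span 𝕜 (Set.range v))ᗮ.starProjection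

variable (𝕜) in
/-- The coefficients, with respect to a linearly independent family `v`, of the orthogonal
projection of `x` onto the span of `v`. They are a junk value if `v` is linearly dependent. -/
def gramCoeff [Fintype ι] [DecidableEq ι] (v : ι → V) (x : V) : ι → 𝕜 :=
  (gram 𝕜 v)⁻¹ *ᵥ fun i => inner 𝕜 (v i) x

section Finite

variable [Finite ι] {v : ι → V} {u : V}

theorem inner_spanPerp_of_mem (hu : u ∈ span 𝕜 (Set.range v)) (x : V) :
    inner 𝕜 u (spanPerp 𝕜 v x) = 0 :=
  inner_right_of_mem_orthogonal hu (starProjection_apply_mem _ x)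

theorem spanPerp_inner_of_mem (hu : u ∈ span 𝕜 (Set.range v)) (x : V) :
    inner 𝕜 (spanPerp 𝕜 v x) u = 0 :=
  inner_left_of_mem_orthogonal hu (starProjection_apply_mem _ x)

theorem spanPerp_inner_of_mem_orthogonal (hu : u ∈ (span 𝕜 (Set.range v))ᗮ) (x : V) :
    inner 𝕜 (spanPerp 𝕜 v x) u = inner 𝕜 x u := by
  rw [spanPerp, inner_starProjection_left_eq_right, starProjection_eq_self_iff.2 hu]

theorem inner_spanPerp_right (x y : V) :
    inner 𝕜 x (spanPerp 𝕜 v y) = inner 𝕜 (spanPerp 𝕜 v x) (spanPerp 𝕜 v y) :=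
  (spanPerp_inner_of_mem_orthogonal (starProjection_apply_mem _ y) x).symm

theorem inner_spanPerp_left (x y : V) :
    inner 𝕜 (spanPerp 𝕜 v x) y = inner 𝕜 (spanPerp 𝕜 v x) (spanPerp 𝕜 v y) := by
  rw [← inner_spanPerp_right, spanPerp, inner_starProjection_left_eq_right]

end Finite

variable [Fintype ι] [DecidableEq ι] {v : ι → V} {u : V}

theorem sum_inner_mul_gramCoeff (hv : LinearIndependent 𝕜 v) (x : V) (i : ι) :
    ∑ j, inner 𝕜 (v i) (v j) * gramCoeff 𝕜 v x j = inner 𝕜 (v i) x := by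
  have h : gram 𝕜 v *ᵥ gramCoeff 𝕜 v x = fun i => inner 𝕜 (v i) x := by
    rw [gramCoeff, mulVec_mulVec,
      mul_nonsing_inv _ (isUnit_iff_ne_zero.2 (det_gram_ne_zero_iff_linearIndependent.2 hv)),
      one_mulVec]
  exact congrFun h i

theorem spanPerp_eq_sub_sum (hv : LinearIndependent 𝕜 v) (x : V) :
    spanPerp 𝕜 v x = x - ∑ i, gramCoeff 𝕜 v x i • v i := by
  rw [spanPerp, starProjection_orthogonal_val]
  congr 1
  refine eq_starProjection_of_mem_orthogonal
    (sum_mem fun i _ => smul_mem _ _ (subset_span ⟨i, rfl⟩))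
    (mem_orthogonal_span_range_iff.2 fun i => ?_)
  simp only [inner_sub_right, inner_sum, inner_smul_right, mul_comm (gramCoeff _ _ _ _),
    sum_inner_mul_gramCoeff hv, sub_self]

theorem sum_gramCoeff_mul_inner (hv : LinearIndependent 𝕜 v) (hu : u ∈ span 𝕜 (Set.range v))
    (x : V) : ∑ i, gramCoeff 𝕜 v x i * inner 𝕜 u (v i) = inner 𝕜 u x := by
  have h := inner_spanPerp_of_mem hu x
  rw [spanPerp_eq_sub_sum hv, inner_sub_right, inner_sum, sub_eq_zero] at h
  simp only [h, inner_smul_right]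

theorem det_inner_sumElim [Fintype κ] [DecidableEq κ] (hv : LinearIndependent 𝕜 v)
    (x y : κ → V) :
    (of fun a b => inner 𝕜 (Sum.elim v x a) (Sum.elim v y b)).det =
      (gram 𝕜 v).det * (of fun i j => inner 𝕜 (spanPerp 𝕜 v (x i)) (spanPerp 𝕜 v (y j))).det := by
  let := invertibleOfIsUnitDet (gram 𝕜 v)
    (isUnit_iff_ne_zero.2 (det_gram_ne_zero_iff_linearIndependent.2 hv))
  convert det_fromBlocks₁₁ (gram 𝕜 v) (of fun p j => inner 𝕜 (v p) (y j))
    (of fun i p => inner 𝕜 (x i) (v p)) (of fun i j => inner 𝕜 (x i) (y j)) using 2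
  · ext (a | a) (b | b) <;> rfl
  · congr 1
    ext i j
    rw [of_apply, ← inner_spanPerp_right, spanPerp_eq_sub_sum hv, inner_sub_right, inner_sum,
      invOf_eq_nonsing_inv, Matrix.mul_assoc]
    simp only [inner_smul_right, mul_comm (gramCoeff _ _ _ _)]
    rfl

end SpanPerp

section SpanPerpCalculus

variable {V ι : Type*} [NormedAddCommGroup V] [InnerProductSpace ℂ V]

theorem differentiableAt_gramCoeff [Fintype ι] [DecidableEq ι]
    {E : Type*} [NormedAddCommGroup E] [NormedSpace ℝ E]
    {v : E → ι → V} {x : E → V} {z : E} (hv : DifferentiableAt ℝ v z)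
    (hx : DifferentiableAt ℝ x z) (hli : LinearIndependent ℂ (v z)) (i : ι) :
    DifferentiableAt ℝ (fun w => gramCoeff ℂ (v w) (x w) i) z := by
  rw [differentiableAt_pi] at hv
  exact DifferentiableAt.fun_sum fun j _ =>
    (differentiableAt_matrix_inv_apply (fun a b => (hv a).inner ℂ (hv b))
      (det_gram_ne_zero_iff_linearIndependent.2 hli) i j).mul ((hv j).inner ℂ hx)

variable {v : ℂ → ι → V} {x y : ℂ → V} {z : ℂ}

theorem spanPerp_eventuallyEq_sub_sum [Fintype ι] [DecidableEq ι]
    (hv : ContinuousAt v z) (hli : LinearIndependent ℂ (v z)) :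
    (fun w => spanPerp ℂ (v w) (x w)) =ᶠ[𝓝 z]
      fun w => x w - ∑ i, gramCoeff ℂ (v w) (x w) i • v w i :=
  (hv.eventually hli.eventually).mono fun w hw => spanPerp_eq_sub_sum hw (x w)

theorem differentiableAt_spanPerp [Finite ι] (hv : DifferentiableAt ℝ v z)
    (hx : DifferentiableAt ℝ x z) (hli : LinearIndependent ℂ (v z)) :
    DifferentiableAt ℝ (fun w => spanPerp ℂ (v w) (x w)) z := by
  have := Fintype.ofFinite ι
  classical
  have hsum : DifferentiableAt ℝ (fun w => ∑ i, gramCoeff ℂ (v w) (x w) i • v w i) z :=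
    DifferentiableAt.fun_sum fun i _ =>
      (differentiableAt_gramCoeff hv hx hli i).fun_smul (differentiableAt_pi.1 hv i)
  exact (hx.fun_sub hsum).congr_of_eventuallyEq (spanPerp_eventuallyEq_sub_sum hv.continuousAt hli)

theorem Dzbar_spanPerp [Fintype ι] [DecidableEq ι] (hv : DifferentiableAt ℂ v z)
    (hx : DifferentiableAt ℂ x z) (hli : LinearIndependent ℂ (v z)) :
    Dzbar (fun w => spanPerp ℂ (v w) (x w)) z =
      -∑ i, Dzbar (fun w => gramCoeff ℂ (v w) (x w) i) z • v z i := by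
  have hvi := differentiableAt_pi.1 hv
  have hc := differentiableAt_gramCoeff (hv.restrictScalars ℝ) (hx.restrictScalars ℝ) hli
  have hcv i := (hc i).fun_smul ((hvi i).restrictScalars ℝ)
  rw [Dzbar_congr (spanPerp_eventuallyEq_sub_sum hv.continuousAt hli),
    Dzbar_fun_sub (hx.restrictScalars ℝ) (DifferentiableAt.fun_sum fun i _ => hcv i),
    Dzbar_eq_zero hx, zero_sub, Dzbar_fun_sum hcv]
  simp only [Dzbar_fun_smul (hc _) ((hvi _).restrictScalars ℝ), Dzbar_eq_zero (hvi _), smul_zero,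
    add_zero]

theorem Dzbar_spanPerp_mem_span [Finite ι] (hv : DifferentiableAt ℂ v z)
    (hx : DifferentiableAt ℂ x z) (hli : LinearIndependent ℂ (v z)) :
    Dzbar (fun w => spanPerp ℂ (v w) (x w)) z ∈ span ℂ (Set.range (v z)) := by
  have := Fintype.ofFinite ι
  classical
  rw [Dzbar_spanPerp hv hx hli]
  exact neg_mem (sum_mem fun i _ => smul_mem _ _ (subset_span ⟨i, rfl⟩))

theorem inner_Dzbar_spanPerp [Finite ι] (hv : DifferentiableAt ℂ v z)
    (hx : DifferentiableAt ℂ x z) (hli : LinearIndependent ℂ (v z)) (i : ι) :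
    ⟪v z i, Dzbar (fun w => spanPerp ℂ (v w) (x w)) z⟫ =
      -⟪deriv v z i, spanPerp ℂ (v z) (x z)⟫ := by
  have := Fintype.ofFinite ι
  have hvi := differentiableAt_pi.1 hv
  have h := Dzbar_inner ((hvi i).restrictScalars ℝ)
    (differentiableAt_spanPerp (hv.restrictScalars ℝ) (hx.restrictScalars ℝ) hli)
  simp only [inner_spanPerp_of_mem (subset_span (Set.mem_range_self i)), Dzbar_const,
    Dz_eq_deriv (hvi i)] at h
  rw [deriv_pi hvi]
  exact eq_neg_of_add_eq_zero_right h.symm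

theorem Dz_inner_spanPerp [Fintype ι] [DecidableEq ι] (hv : DifferentiableAt ℂ v z)
    (hx : DifferentiableAt ℂ x z) (hy : DifferentiableAt ℂ y z) (hli : LinearIndependent ℂ (v z)) :
    Dz (fun w => ⟪spanPerp ℂ (v w) (x w), spanPerp ℂ (v w) (y w)⟫) z =
      ⟪spanPerp ℂ (v z) (x z), deriv y z⟫ -
        ∑ i, gramCoeff ℂ (v z) (y z) i * ⟪spanPerp ℂ (v z) (x z), deriv v z i⟫ := by
  have hswap i : ⟪Dzbar (fun w => spanPerp ℂ (v w) (x w)) z, v z i⟫ =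
      -⟪spanPerp ℂ (v z) (x z), deriv v z i⟫ := by
    rw [← inner_conj_symm, inner_Dzbar_spanPerp hv hx hli, map_neg, inner_conj_symm]
  simp only [← inner_spanPerp_left]
  rw [Dz_inner (differentiableAt_spanPerp (hv.restrictScalars ℝ) (hx.restrictScalars ℝ) hli)
    (hy.restrictScalars ℝ), Dz_eq_deriv hy,
    ← sum_gramCoeff_mul_inner hli (Dzbar_spanPerp_mem_span hv hx hli)]
  simp only [hswap, mul_neg, Finset.sum_neg_distrib]
  ring

end SpanPerpCalculus

section Jets

variable {V : Type*} [NormedAddCommGroup V] [InnerProductSpace ℂ V] {n : ℕ}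

/-- The `(m - 1)`-jet frame `σ_1,…,σ_n,…,σ_1^{(m-1)},…,σ_n^{(m-1)}`, whose Gram matrix is
`jGram σ m`. -/
def jetFrame (σ : Fin n → ℂ → V) (m : ℕ) (z : ℂ) : Fin m × Fin n → V :=
  fun p => iteratedDeriv p.1 (σ p.2) z

/-- The component of `σ_j^{(m)}` orthogonal to the derivatives of order less than `m`; for varying
`j` these represent the induced frame of the quotient bundle `J_m(E)/J_{m-1}(E)`. -/
def jetPerp (σ : Fin n → ℂ → V) (m : ℕ) (j : Fin n) (z : ℂ) : V :=
  spanPerp ℂ (jetFrame σ m z) (iteratedDeriv m (σ j) z)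

/-- The metric of the quotient bundle `J_m(E)/J_{m-1}(E)` in its induced frame. -/
def quotientMetric (σ : Fin n → ℂ → V) (m : ℕ) (z : ℂ) : Matrix (Fin n) (Fin n) ℂ :=
  gram ℂ fun j => jetPerp σ m j z

/-- The coefficients of the derivatives of order `m` in the orthogonal projections of
`σ_1^{(m+1)},…,σ_n^{(m+1)}` onto the span of the derivatives of order at most `m`. This is
`trace⊗Id` of the connection form `(J_m h)⁻¹·∂(J_m h)/∂z`. -/
def jetConnectionTrace (σ : Fin n → ℂ → V) (m : ℕ) (z : ℂ) : Matrix (Fin n) (Fin n) ℂ :=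
  of fun i j => gramCoeff ℂ (jetFrame σ (m + 1) z) (iteratedDeriv (m + 1) (σ j) z) (Fin.last m, i)

variable {σ : Fin n → ℂ → V} {m : ℕ} {z : ℂ}

theorem iteratedDeriv_mem_span_jetFrame {r : ℕ} (hr : r < m) (i : Fin n) :
    iteratedDeriv r (σ i) z ∈ span ℂ (Set.range (jetFrame σ m z)) :=
  subset_span ⟨(⟨r, hr⟩, i), rfl⟩

theorem linearIndependent_jetFrame_mono {N : ℕ} (hmN : m ≤ N)
    (h : LinearIndependent ℂ (jetFrame σ N z)) : LinearIndependent ℂ (jetFrame σ m z) :=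
  h.comp (Prod.map (Fin.castLE hmN) id)
    ((Fin.castLE_injective hmN).prodMap Function.injective_id)

theorem jetPerp_mem_span_jetFrame_succ (j : Fin n) :
    jetPerp σ m j z ∈ span ℂ (Set.range (jetFrame σ (m + 1) z)) := by
  have hle : span ℂ (Set.range (jetFrame σ m z)) ≤ span ℂ (Set.range (jetFrame σ (m + 1) z)) := by
    rw [span_le]
    rintro _ ⟨p, rfl⟩
    exact iteratedDeriv_mem_span_jetFrame (p.1.2.trans m.lt_succ_self) p.2
  rw [jetPerp, spanPerp, starProjection_orthogonal_val]
  exact sub_mem (iteratedDeriv_mem_span_jetFrame m.lt_succ_self j)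
    (hle (starProjection_apply_mem _ _))

theorem jetPerp_inner_iteratedDeriv_of_lt {r : ℕ} (hr : r < m) (i j : Fin n) :
    ⟪jetPerp σ m i z, iteratedDeriv r (σ j) z⟫ = 0 :=
  spanPerp_inner_of_mem (iteratedDeriv_mem_span_jetFrame hr j) _

theorem jetPerp_inner_iteratedDeriv (i j : Fin n) :
    ⟪jetPerp σ m i z, iteratedDeriv m (σ j) z⟫ = quotientMetric σ m z i j :=
  inner_spanPerp_left _ _

theorem sum_mul_jetPerp_inner_iteratedDeriv_add (s : ℕ) (c : Fin (m + 1) × Fin n → ℂ)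
    (i : Fin n) :
    ∑ p, c p * ⟪jetPerp σ (m + s) i z, iteratedDeriv (p.1 + s) (σ p.2) z⟫ =
      ∑ l, quotientMetric σ (m + s) z i l * c (Fin.last m, l) := by
  have hlt (r : Fin m) (j : Fin n) :
      ⟪jetPerp σ (m + s) i z, iteratedDeriv (r + s) (σ j) z⟫ = 0 :=
    jetPerp_inner_iteratedDeriv_of_lt (Nat.add_lt_add_right r.2 s) i j
  simp only [Fintype.sum_prod_type, Fin.sum_univ_castSucc, Fin.val_castSucc, Fin.val_last, hlt,
    mul_comm (c _), zero_mul, Finset.sum_const_zero, zero_add, jetPerp_inner_iteratedDeriv]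

theorem det_smul_quotientMetric (h : LinearIndependent ℂ (jetFrame σ m z)) :
    (jGram σ m z).det • quotientMetric σ m z = hMat σ m z := by
  ext i j
  refine Eq.trans ?_ (det_inner_sumElim h (fun _ : Unit => iteratedDeriv m (σ i) z)
    fun _ => iteratedDeriv m (σ j) z).symm
  rw [det_unique (n := Unit)]
  rfl

theorem det_jGram_succ (h : LinearIndependent ℂ (jetFrame σ m z)) :
    (jGram σ (m + 1) z).det = (jGram σ m z).det * (quotientMetric σ m z).det := by
  let e : (Fin m × Fin n) ⊕ Fin n ≃ Fin (m + 1) × Fin n :=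
    ((Equiv.refl _).sumCongr (Equiv.uniqueProd (Fin n) (Fin 1)).symm).trans
      ((Equiv.sumProdDistrib _ _ _).symm.trans (finSumFinEquiv.prodCongr (Equiv.refl _)))
  have he : jetFrame σ (m + 1) z ∘ e =
      Sum.elim (jetFrame σ m z) fun i => iteratedDeriv m (σ i) z := by
    ext (p | i) <;> rfl
  have hgram : (jGram σ (m + 1) z).submatrix e e = gram ℂ (jetFrame σ (m + 1) z ∘ e) := rfl
  rw [← det_submatrix_equiv_self e, hgram, he]
  exact det_inner_sumElim h _ _

theorem det_jGram_ne_zero (h : LinearIndependent ℂ (jetFrame σ m z)) : (jGram σ m z).det ≠ 0 :=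
  det_gram_ne_zero_iff_linearIndependent.2 h

theorem isUnit_det_quotientMetric (h : LinearIndependent ℂ (jetFrame σ (m + 1) z)) :
    IsUnit (quotientMetric σ m z).det :=
  isUnit_iff_ne_zero.2 <| right_ne_zero_of_mul <|
    det_jGram_succ (linearIndependent_jetFrame_mono m.le_succ h) ▸ det_jGram_ne_zero h

theorem inv_det_smul_hMat (h : LinearIndependent ℂ (jetFrame σ m z)) :
    (jGram σ m z).det⁻¹ • hMat σ m z = quotientMetric σ m z := by
  rw [← det_smul_quotientMetric h, inv_smul_smul₀ (det_jGram_ne_zero h)]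

theorem smul_inv_hMat_mul_hMat_succ (h : LinearIndependent ℂ (jetFrame σ (m + 1) z)) :
    ((jGram σ (m + 1) z).det⁻¹ * (jGram σ m z).det) • ((hMat σ m z)⁻¹ * hMat σ (m + 1) z) =
      (quotientMetric σ m z)⁻¹ * quotientMetric σ (m + 1) z := by
  have hm := linearIndependent_jetFrame_mono m.le_succ h
  let := invertibleOfNonzero (det_jGram_ne_zero hm)
  rw [← inv_det_smul_hMat h, ← det_smul_quotientMetric hm,
    inv_smul _ _ (isUnit_det_quotientMetric h), invOf_eq_inv, Matrix.smul_mul, Matrix.mul_smul,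
    smul_smul, mul_assoc, mul_inv_cancel₀ (det_jGram_ne_zero hm), mul_one]

theorem quotientMetric_mul_jetConnectionTrace (h : LinearIndependent ℂ (jetFrame σ (m + 1) z)) :
    quotientMetric σ m z * jetConnectionTrace σ m z =
      of fun i j => ⟪jetPerp σ m i z, iteratedDeriv (m + 1) (σ j) z⟫ := by
  ext i j
  exact (sum_mul_jetPerp_inner_iteratedDeriv_add 0 _ i).symm.trans
    (sum_gramCoeff_mul_inner h (jetPerp_mem_span_jetFrame_succ i) _)

section Calculus

variable [CompleteSpace V]

theorem differentiableAt_iteratedDeriv {f : ℂ → V} (hf : AnalyticAt ℂ f z) (m : ℕ) :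
    DifferentiableAt ℂ (iteratedDeriv m f) z := by
  rw [iteratedDeriv_eq_iterate]
  exact (hf.iterated_deriv m).differentiableAt

theorem differentiableAt_jetFrame (hσ : ∀ i, AnalyticAt ℂ (σ i) z) :
    DifferentiableAt ℂ (jetFrame σ m) z :=
  differentiableAt_pi.2 fun p => differentiableAt_iteratedDeriv (hσ p.2) p.1

theorem deriv_jetFrame (hσ : ∀ i, AnalyticAt ℂ (σ i) z) (p : Fin m × Fin n) :
    deriv (jetFrame σ m) z p = iteratedDeriv (p.1 + 1) (σ p.2) z := by
  have hpi : deriv (jetFrame σ m) z = _ :=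
    deriv_pi fun q => differentiableAt_iteratedDeriv (hσ q.2) q.1
  rw [hpi, iteratedDeriv_succ]
  rfl

theorem differentiableAt_jetConnectionTrace (hσ : ∀ i, AnalyticAt ℂ (σ i) z)
    (h : LinearIndependent ℂ (jetFrame σ (m + 1) z)) (i j : Fin n) :
    DifferentiableAt ℝ (fun w => jetConnectionTrace σ m w i j) z :=
  differentiableAt_gramCoeff ((differentiableAt_jetFrame hσ).restrictScalars ℝ)
    ((differentiableAt_iteratedDeriv (hσ j) (m + 1)).restrictScalars ℝ) h (Fin.last m, i)

theorem mDz_quotientMetric_succ (hσ : ∀ i, AnalyticAt ℂ (σ i) z)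
    (h : LinearIndependent ℂ (jetFrame σ (m + 2) z)) :
    mDz (quotientMetric σ (m + 1)) z =
      quotientMetric σ (m + 1) z * (jetConnectionTrace σ (m + 1) z - jetConnectionTrace σ m z) := by
  rw [Matrix.mul_sub, quotientMetric_mul_jetConnectionTrace h]
  ext i j
  refine (Dz_inner_spanPerp (differentiableAt_jetFrame hσ)
    (differentiableAt_iteratedDeriv (hσ i) (m + 1)) (differentiableAt_iteratedDeriv (hσ j) (m + 1))
    (linearIndependent_jetFrame_mono (m + 1).le_succ h)).trans ?_
  simp only [deriv_jetFrame hσ, ← iteratedDeriv_succ]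
  exact congrArg _ (sum_mul_jetPerp_inner_iteratedDeriv_add 1 _ i)

theorem iteratedDeriv_inner_Dzbar_jetPerp (hσ : ∀ i, AnalyticAt ℂ (σ i) z)
    (h : LinearIndependent ℂ (jetFrame σ m z)) {r : ℕ} (hr : r < m) (i j : Fin n) :
    ⟪iteratedDeriv r (σ i) z, Dzbar (jetPerp σ m j) z⟫ =
      -⟪iteratedDeriv (r + 1) (σ i) z, jetPerp σ m j z⟫ := by
  rw [← deriv_jetFrame hσ (⟨r, hr⟩, i)]
  exact inner_Dzbar_spanPerp (differentiableAt_jetFrame hσ)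
    (differentiableAt_iteratedDeriv (hσ j) m) h (⟨r, hr⟩, i)

theorem Dzbar_jetPerp_succ_mem_orthogonal (hσ : ∀ i, AnalyticAt ℂ (σ i) z)
    (h : LinearIndependent ℂ (jetFrame σ (m + 1) z)) (j : Fin n) :
    Dzbar (jetPerp σ (m + 1) j) z ∈ (span ℂ (Set.range (jetFrame σ m z)))ᗮ := by
  refine mem_orthogonal_span_range_iff.2 fun p => ?_
  rw [jetFrame, iteratedDeriv_inner_Dzbar_jetPerp hσ h (p.1.2.trans m.lt_succ_self), neg_eq_zero]
  exact inner_spanPerp_of_mem (iteratedDeriv_mem_span_jetFrame (Nat.succ_lt_succ p.1.2) p.2) _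

theorem jetPerp_inner_Dzbar_jetPerp_succ (hσ : ∀ i, AnalyticAt ℂ (σ i) z)
    (h : LinearIndependent ℂ (jetFrame σ (m + 1) z)) (i j : Fin n) :
    ⟪jetPerp σ m i z, Dzbar (jetPerp σ (m + 1) j) z⟫ = -quotientMetric σ (m + 1) z i j := by
  rw [jetPerp, spanPerp_inner_of_mem_orthogonal (Dzbar_jetPerp_succ_mem_orthogonal hσ h j),
    iteratedDeriv_inner_Dzbar_jetPerp hσ h m.lt_succ_self, neg_inj]
  exact inner_spanPerp_right _ _

theorem mDzbar_jetConnectionTrace (hσ : ∀ i, AnalyticAt ℂ (σ i) z)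
    (h : LinearIndependent ℂ (jetFrame σ (m + 1) z)) :
    mDzbar (jetConnectionTrace σ m) z =
      (quotientMetric σ m z)⁻¹ * quotientMetric σ (m + 1) z := by
  have hmul :
      quotientMetric σ m z * mDzbar (jetConnectionTrace σ m) z = quotientMetric σ (m + 1) z := by
    ext i j
    have hDzbar : Dzbar (jetPerp σ (m + 1) j) z = _ :=
      Dzbar_spanPerp (differentiableAt_jetFrame hσ)
        (differentiableAt_iteratedDeriv (hσ j) (m + 1)) h
    have hinner := jetPerp_inner_Dzbar_jetPerp_succ hσ h i j
    rw [hDzbar, inner_neg_right, neg_inj, inner_sum] at hinner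
    simp only [inner_smul_right] at hinner
    exact (sum_mul_jetPerp_inner_iteratedDeriv_add 0 _ i).symm.trans hinner
  rw [← hmul, nonsing_inv_mul_cancel_left _ _ (isUnit_det_quotientMetric h)]

theorem eventually_analyticAt_and_linearIndependent_jetFrame (hσ : ∀ i, AnalyticAt ℂ (σ i) z)
    (h : LinearIndependent ℂ (jetFrame σ m z)) :
    ∀ᶠ w in 𝓝 z, (∀ i, AnalyticAt ℂ (σ i) w) ∧ LinearIndependent ℂ (jetFrame σ m w) :=
  (eventually_all.2 fun i => (hσ i).eventually_analyticAt).and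
    ((differentiableAt_jetFrame hσ).continuousAt.eventually h.eventually)

theorem inv_mul_mDz_inv_det_smul_hMat (hσ : ∀ i, AnalyticAt ℂ (σ i) z)
    (h : LinearIndependent ℂ (jetFrame σ (m + 2) z)) :
    ((jGram σ (m + 1) z).det⁻¹ • hMat σ (m + 1) z)⁻¹ *
        mDz (fun w => (jGram σ (m + 1) w).det⁻¹ • hMat σ (m + 1) w) z =
      jetConnectionTrace σ (m + 1) z - jetConnectionTrace σ m z := by
  have hsucc := linearIndependent_jetFrame_mono (m + 1).le_succ h
  have hmetric : (fun w => (jGram σ (m + 1) w).det⁻¹ • hMat σ (m + 1) w) =ᶠ[𝓝 z]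
      quotientMetric σ (m + 1) :=
    (eventually_analyticAt_and_linearIndependent_jetFrame hσ hsucc).mono
      fun w hw => inv_det_smul_hMat hw.2
  rw [hmetric.eq_of_nhds, mDz_congr hmetric, mDz_quotientMetric_succ hσ h,
    nonsing_inv_mul_cancel_left _ _ (isUnit_det_quotientMetric h)]

end Calculus

end Jets

theorem stmt17_general {n : ℕ} (k : ℕ) (hk : 1 ≤ k) (σ : Fin n → ℂ → H) (z : ℂ)
    (hσ : ∀ i, AnalyticAt ℂ (σ i) z)
    (hnd : LinearIndependent ℂ
      fun p : Fin (k + 1) × Fin n => iteratedDeriv (p.1 : ℕ) (σ p.2) z) :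
    (((jGram σ (k + 1) z).det)⁻¹ * (jGram σ k z).det) •
        ((hMat σ k z)⁻¹ * hMat σ (k + 1) z) -
      (((jGram σ k z).det)⁻¹ * (jGram σ (k - 1) z).det) •
        ((hMat σ (k - 1) z)⁻¹ * hMat σ k z) =
    mDzbar (fun w =>
      (((jGram σ k w).det)⁻¹ • hMat σ k w)⁻¹ *
        mDz (fun u => ((jGram σ k u).det)⁻¹ • hMat σ k u) w) z := by
  obtain ⟨m, rfl⟩ : ∃ m, k = m + 1 := ⟨k - 1, by omega⟩
  rw [Nat.add_sub_cancel]
  have hm : LinearIndependent ℂ (jetFrame σ (m + 1) z) :=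
    linearIndependent_jetFrame_mono (m + 1).le_succ hnd
  have hconn := (eventually_analyticAt_and_linearIndependent_jetFrame hσ hnd).mono
    fun w hw => inv_mul_mDz_inv_det_smul_hMat hw.1 hw.2
  rw [mDzbar_congr hconn, mDzbar_fun_sub (differentiableAt_jetConnectionTrace hσ hnd)
      (differentiableAt_jetConnectionTrace hσ hm), mDzbar_jetConnectionTrace hσ hnd,
    mDzbar_jetConnectionTrace hσ hm, smul_inv_hMat_mul_hMat_succ hnd,
    smul_inv_hMat_mul_hMat_succ hm]

/-- Trace formula for jet bundles: with `Q_k := (det J_{k−1}h)⁻¹·h_k` the metric of the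
quotient `J_k(E)/J_{k−1}(E)` (conventions `det J_{−1}h := 1`, `h_0 := J_0 h` are automatic
here: `jGram σ 0` is the empty matrix, of determinant `1`),
`(trace⊗Id_{n×n})(𝒦_{J_k(E_f)}) − (trace⊗Id_{n×n})(𝒦_{J_{k−1}(E_f)})
  = 𝒦_{J_k(E_f)/J_{k−1}(E_f)}`, i.e.
`(det J_k h)⁻¹·det(J_{k−1}h)·h_k⁻¹·h_{k+1} − (det J_{k−1}h)⁻¹·det(J_{k−2}h)·h_{k−1}⁻¹·h_k
  = ∂/∂z̄(Q_k⁻¹·∂Q_k/∂z)` on `Ω`. -/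
theorem stmt17 {n : ℕ} (Ω : Set ℂ) (hΩ : IsOpen Ω) (k : ℕ) (hk : 1 ≤ k)
    (σ : Fin n → ℂ → H) (hσ : ∀ i, DifferentiableOn ℂ (σ i) Ω)
    (hnd : ∀ z ∈ Ω, LinearIndependent ℂ
      fun p : Fin (k + 2) × Fin n => iteratedDeriv (p.1 : ℕ) (σ p.2) z) :
    ∀ z ∈ Ω,
      (((jGram σ (k + 1) z).det)⁻¹ * (jGram σ k z).det) •
          ((hMat σ k z)⁻¹ * hMat σ (k + 1) z) -
        (((jGram σ k z).det)⁻¹ * (jGram σ (k - 1) z).det) •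
          ((hMat σ (k - 1) z)⁻¹ * hMat σ k z) =
      mDzbar (fun w =>
        (((jGram σ k w).det)⁻¹ • hMat σ k w)⁻¹ *
          mDz (fun u => ((jGram σ k u).det)⁻¹ • hMat σ k u) w) z := by
  exact fun z hz => stmt17_general k hk σ z (fun i => (hσ i).analyticAt (hΩ.mem_nhds hz))
    (linearIndependent_jetFrame_mono (k + 1).le_succ (hnd z hz))
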